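/- Let K be a perfect field of characteristic 2 and let (g,B) be an irreducible finite-dimensional NIS-Lie superalgebra over K with B even. If dim z(g)_1 > dim z(g)_0, then there exists a nonzero x ∈ z(g)_1 with s_g(x) = 0 (so z(g)_1 ∩ C(g,B) ≠ {0}, where C(g,B) := {u ∈ g_1 : B(s_g(u),s_g(v)) = 0 for all v ∈ g_1}), and (g,B) is obtained as a D_od-extension of a NIS-Lie superalgebra of dimension dim(g) − 2. -/

import Mathlib

/-!
Common definitions: Lie superalgebras in characteristic 2 (encoded by their even
part `g0`, odd part `g1`, bracket components and squaring), NIS forms (even and odd),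
homogeneous derivations, isometries, ideals, irreducibility, and the structure
formulas of the various double extensions.
-/

namespace Char2DoubleExt

section Defs

variable (K : Type) [Field K]
variable (g0 g1 h0 h1 : Type)
variable [AddCommGroup g0] [Module K g0] [AddCommGroup g1] [Module K g1]
variable [AddCommGroup h0] [Module K h0] [AddCommGroup h1] [Module K h1]

/-- A Lie superalgebra over a field of characteristic 2: `g0` is the even part,
`g1` the odd part, `br0` the bracket on `g0`, `br1` the action of `g0` on `g1`
(the mixed bracket, extended symmetrically), `br11` the bracket of two odd
elements, and `sq` the squaring, whose polarization is `br11`. -/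
structure SuperAlg : Type where
  br0 : g0 →ₗ[K] g0 →ₗ[K] g0
  br1 : g0 →ₗ[K] g1 →ₗ[K] g1
  br11 : g1 →ₗ[K] g1 →ₗ[K] g0
  sq : g1 → g0
  sq_smul : ∀ (c : K) (f : g1), sq (c • f) = (c * c) • sq f
  sq_add : ∀ f g : g1, sq (f + g) = sq f + sq g + br11 f g
  br0_self : ∀ x : g0, br0 x x = 0
  br11_comm : ∀ f g : g1, br11 f g = br11 g f
  jacobi0 : ∀ x y z : g0, br0 x (br0 y z) + br0 y (br0 z x) + br0 z (br0 x y) = 0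
  act_br : ∀ (x y : g0) (f : g1), br1 (br0 x y) f = br1 x (br1 y f) + br1 y (br1 x f)
  jacobi_mix : ∀ (x : g0) (f g : g1),
    br0 x (br11 f g) + br11 f (br1 x g) + br11 g (br1 x f) = 0
  sq_br0 : ∀ (f : g1) (x : g0), br0 (sq f) x = br11 f (br1 x f)
  sq_br1 : ∀ f g : g1, br1 (sq f) g = br1 (br11 f g) f

/-- A non-degenerate invariant supersymmetric *even* bilinear form on a Lie
superalgebra in characteristic 2: it pairs `g0` with `g0` (component `B0`) and
`g1` with `g1` (component `B1`); mixed pairings vanish by evenness. -/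
structure EvenNIS (S : SuperAlg K g0 g1) : Type where
  B0 : g0 →ₗ[K] g0 →ₗ[K] K
  B1 : g1 →ₗ[K] g1 →ₗ[K] K
  symm0 : ∀ x y, B0 x y = B0 y x
  symm1 : ∀ f g, B1 f g = B1 g f
  alt1 : ∀ f, B1 f f = 0
  nondeg0 : ∀ x, (∀ y, B0 x y = 0) → x = 0
  nondeg1 : ∀ f, (∀ g, B1 f g = 0) → f = 0
  inv0 : ∀ x y z, B0 (S.br0 x y) z = B0 x (S.br0 y z)
  inv1 : ∀ (x : g0) (f g : g1), B1 (S.br1 x f) g = B0 x (S.br11 f g)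
  inv2 : ∀ (f g : g1) (x : g0), B0 (S.br11 f g) x = B1 f (S.br1 x g)

/-- A non-degenerate invariant supersymmetric *odd* bilinear form: it pairs `g0`
with `g1` (component `Bo`); like-parity pairings vanish by oddness, and
`B(f,f) = 0` for odd `f` is automatic. -/
structure OddNIS (S : SuperAlg K g0 g1) : Type where
  Bo : g0 →ₗ[K] g1 →ₗ[K] K
  nondeg0 : ∀ x, (∀ f, Bo x f = 0) → x = 0
  nondeg1 : ∀ f, (∀ x, Bo x f = 0) → f = 0
  inv0 : ∀ (x y : g0) (f : g1), Bo (S.br0 x y) f = Bo x (S.br1 y f)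
  inv1 : ∀ (x y : g0) (f : g1), Bo y (S.br1 x f) = Bo x (S.br1 y f)
  inv2 : ∀ f g h : g1, Bo (S.br11 f g) h = Bo (S.br11 g h) f

/-- An even derivation of a Lie superalgebra in characteristic 2. -/
structure EvenDer (S : SuperAlg K g0 g1) : Type where
  D0 : g0 →ₗ[K] g0
  D1 : g1 →ₗ[K] g1
  der0 : ∀ x y, D0 (S.br0 x y) = S.br0 (D0 x) y + S.br0 x (D0 y)
  der1 : ∀ x f, D1 (S.br1 x f) = S.br1 (D0 x) f + S.br1 x (D1 f)
  der_sq : ∀ f, D0 (S.sq f) = S.br11 (D1 f) f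

/-- An odd derivation of a Lie superalgebra in characteristic 2. -/
structure OddDer (S : SuperAlg K g0 g1) : Type where
  D0 : g0 →ₗ[K] g1
  D1 : g1 →ₗ[K] g0
  der0 : ∀ x y, D0 (S.br0 x y) = S.br1 x (D0 y) + S.br1 y (D0 x)
  der1 : ∀ x f, D1 (S.br1 x f) = S.br11 (D0 x) f + S.br0 x (D1 f)
  der_sq : ∀ f, D0 (S.sq f) = S.br1 (D1 f) f

/-- An isometry between Lie superalgebras endowed with even NIS forms: an even
linear bijection preserving brackets, squarings and the bilinear forms. -/
structure EvenIsometry (S : SuperAlg K g0 g1) (N : EvenNIS K g0 g1 S)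
    (S' : SuperAlg K h0 h1) (N' : EvenNIS K h0 h1 S') : Type where
  e0 : g0 ≃ₗ[K] h0
  e1 : g1 ≃ₗ[K] h1
  map_br0 : ∀ x y, e0 (S.br0 x y) = S'.br0 (e0 x) (e0 y)
  map_br1 : ∀ x f, e1 (S.br1 x f) = S'.br1 (e0 x) (e1 f)
  map_br11 : ∀ f g, e0 (S.br11 f g) = S'.br11 (e1 f) (e1 g)
  map_sq : ∀ f, e0 (S.sq f) = S'.sq (e1 f)
  map_B0 : ∀ x y, N'.B0 (e0 x) (e0 y) = N.B0 x y
  map_B1 : ∀ f g, N'.B1 (e1 f) (e1 g) = N.B1 f g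

/-- An isometry between Lie superalgebras endowed with odd NIS forms. -/
structure OddIsometry (S : SuperAlg K g0 g1) (N : OddNIS K g0 g1 S)
    (S' : SuperAlg K h0 h1) (N' : OddNIS K h0 h1 S') : Type where
  e0 : g0 ≃ₗ[K] h0
  e1 : g1 ≃ₗ[K] h1
  map_br0 : ∀ x y, e0 (S.br0 x y) = S'.br0 (e0 x) (e0 y)
  map_br1 : ∀ x f, e1 (S.br1 x f) = S'.br1 (e0 x) (e1 f)
  map_br11 : ∀ f g, e0 (S.br11 f g) = S'.br11 (e1 f) (e1 g)
  map_sq : ∀ f, e0 (S.sq f) = S'.sq (e1 f)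
  map_Bo : ∀ x f, N'.Bo (e0 x) (e1 f) = N.Bo x f

/-- A (graded) ideal of a Lie superalgebra in characteristic 2, given by its
even part `I0` and odd part `I1`. -/
def IsIdealPair (S : SuperAlg K g0 g1) (I0 : Submodule K g0) (I1 : Submodule K g1) : Prop :=
  (∀ x ∈ I0, ∀ y, S.br0 x y ∈ I0) ∧ (∀ x ∈ I0, ∀ f, S.br1 x f ∈ I1) ∧
  (∀ f ∈ I1, ∀ x : g0, S.br1 x f ∈ I1) ∧ (∀ f ∈ I1, ∀ g, S.br11 f g ∈ I0) ∧
  (∀ f ∈ I1, S.sq f ∈ I0)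

/-- Irreducibility of a NIS-Lie superalgebra with an even form: it is not the
direct sum of two nonzero mutually orthogonal ideals. -/
def EvenIrreducible (S : SuperAlg K g0 g1) (N : EvenNIS K g0 g1 S) : Prop :=
  ¬ ∃ (I0 J0 : Submodule K g0) (I1 J1 : Submodule K g1),
      IsIdealPair K g0 g1 S I0 I1 ∧ IsIdealPair K g0 g1 S J0 J1 ∧
      (I0 ≠ ⊥ ∨ I1 ≠ ⊥) ∧ (J0 ≠ ⊥ ∨ J1 ≠ ⊥) ∧
      I0 ⊓ J0 = ⊥ ∧ I0 ⊔ J0 = ⊤ ∧ I1 ⊓ J1 = ⊥ ∧ I1 ⊔ J1 = ⊤ ∧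
      (∀ x ∈ I0, ∀ y ∈ J0, N.B0 x y = 0) ∧ (∀ f ∈ I1, ∀ g ∈ J1, N.B1 f g = 0)

/-- Irreducibility of a NIS-Lie superalgebra with an odd form. -/
def OddIrreducible (S : SuperAlg K g0 g1) (N : OddNIS K g0 g1 S) : Prop :=
  ¬ ∃ (I0 J0 : Submodule K g0) (I1 J1 : Submodule K g1),
      IsIdealPair K g0 g1 S I0 I1 ∧ IsIdealPair K g0 g1 S J0 J1 ∧
      (I0 ≠ ⊥ ∨ I1 ≠ ⊥) ∧ (J0 ≠ ⊥ ∨ J1 ≠ ⊥) ∧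
      I0 ⊓ J0 = ⊥ ∧ I0 ⊔ J0 = ⊤ ∧ I1 ⊓ J1 = ⊥ ∧ I1 ⊔ J1 = ⊤ ∧
      (∀ x ∈ I0, ∀ g ∈ J1, N.Bo x g = 0) ∧ (∀ y ∈ J0, ∀ f ∈ I1, N.Bo y f = 0)

/-- An ideal of a Lie superalgebra given as a pair of subsets (closed under the
vector space operations, brackets with arbitrary elements, and the squaring). -/
def IsIdealSet (S : SuperAlg K g0 g1) (I0 : Set g0) (I1 : Set g1) : Prop :=
  ((0 : g0) ∈ I0) ∧ (∀ x y, x ∈ I0 → y ∈ I0 → x + y ∈ I0) ∧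
  (∀ (c : K) x, x ∈ I0 → c • x ∈ I0) ∧
  ((0 : g1) ∈ I1) ∧ (∀ f g, f ∈ I1 → g ∈ I1 → f + g ∈ I1) ∧
  (∀ (c : K) f, f ∈ I1 → c • f ∈ I1) ∧
  (∀ x ∈ I0, ∀ y, S.br0 x y ∈ I0) ∧ (∀ x ∈ I0, ∀ f, S.br1 x f ∈ I1) ∧
  (∀ f ∈ I1, ∀ x : g0, S.br1 x f ∈ I1) ∧ (∀ f ∈ I1, ∀ g, S.br11 f g ∈ I0) ∧
  (∀ f ∈ I1, S.sq f ∈ I0)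

/-- The even part of the center of a Lie superalgebra. -/
def zEven (S : SuperAlg K g0 g1) : Submodule K g0 :=
  (⨅ y : g0, LinearMap.ker (S.br0.flip y)) ⊓ (⨅ f : g1, LinearMap.ker (S.br1.flip f))

/-- The odd part of the center of a Lie superalgebra. -/
def zOdd (S : SuperAlg K g0 g1) : Submodule K g1 :=
  (⨅ x : g0, LinearMap.ker (S.br1 x)) ⊓ (⨅ g : g1, LinearMap.ker (S.br11.flip g))

/-- The compatibility conditions between an even NIS `N`, an even derivation `D`
and a quadratic form `al` on the odd part, entering the `D_ev`-extension (even
form case): `B(Du,v)+B(u,Dv)=0`, `B(Du,u)=0` for even `u`, `al` is quadratic and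
its polar form is `B(·,D·)`. -/
def DevDataEven (S : SuperAlg K g0 g1) (N : EvenNIS K g0 g1 S)
    (D : EvenDer K g0 g1 S) (al : g1 → K) : Prop :=
  (∀ x y : g0, N.B0 (D.D0 x) y + N.B0 x (D.D0 y) = 0) ∧
  (∀ f g : g1, N.B1 (D.D1 f) g + N.B1 f (D.D1 g) = 0) ∧
  (∀ x : g0, N.B0 (D.D0 x) x = 0) ∧
  (∀ (c : K) (f : g1), al (c • f) = c * c * al f) ∧
  (∀ f g : g1, N.B1 f (D.D1 g) = al (f + g) - al f - al g)

/-- The structure constants of the `D_ev`-extension `g = Kx ⊕ a ⊕ Kx*` (even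
form, even `x`, `x*`); an element of the even part is written `(r, u, s)` for
`r x + u + s x*`, and the constant `c` is the (arbitrary) value `B_g(x*,x*)`. -/
def DevExtEvenFormulas (S : SuperAlg K g0 g1) (N : EvenNIS K g0 g1 S)
    (D : EvenDer K g0 g1 S) (al : g1 → K) (c : K)
    (T : SuperAlg K (K × g0 × K) g1) (M : EvenNIS K (K × g0 × K) g1 T) : Prop :=
  (∀ (r s r' s' : K) (u u' : g0),
      T.br0 (r, u, s) (r', u', s')
        = (N.B0 (D.D0 u) u', S.br0 u u' + s • D.D0 u' + s' • D.D0 u, 0)) ∧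
  (∀ (r s : K) (u : g0) (f : g1), T.br1 (r, u, s) f = S.br1 u f + s • D.D1 f) ∧
  (∀ f : g1, T.sq f = (al f, S.sq f, 0)) ∧
  (∀ (r s r' s' : K) (u u' : g0),
      M.B0 (r, u, s) (r', u', s') = N.B0 u u' + r * s' + r' * s + c * (s * s')) ∧
  (∀ f g : g1, M.B1 f g = N.B1 f g)

/-- The compatibility conditions between an even NIS `N`, an odd derivation `D`
and an even element `w = a₀`, entering the `D_od`-extension (even form case):
`B(Du,v) = B(u,Dv)`, `D² = ad_w`, `D(w) = 0`. -/
def DodDataEven (S : SuperAlg K g0 g1) (N : EvenNIS K g0 g1 S)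
    (D : OddDer K g0 g1 S) (w : g0) : Prop :=
  (∀ (x : g0) (f : g1), N.B1 (D.D0 x) f = N.B0 x (D.D1 f)) ∧
  (∀ x : g0, D.D1 (D.D0 x) = S.br0 w x) ∧
  (∀ f : g1, D.D0 (D.D1 f) = S.br1 w f) ∧
  D.D0 w = 0

/-- The structure constants of the `D_od`-extension `g = Kx ⊕ a ⊕ Kx*` (even
form, odd `x`, `x*`); an element of the odd part is written `(r, u, t)` for
`r x + u + t x*`. -/
def DodExtEvenFormulas (S : SuperAlg K g0 g1) (N : EvenNIS K g0 g1 S)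
    (D : OddDer K g0 g1 S) (w : g0)
    (T : SuperAlg K g0 (K × g1 × K)) (M : EvenNIS K g0 (K × g1 × K) T) : Prop :=
  (∀ x y : g0, T.br0 x y = S.br0 x y) ∧
  (∀ (x : g0) (r t : K) (u : g1),
      T.br1 x (r, u, t) = (N.B1 (D.D0 x) u, S.br1 x u + t • D.D0 x, 0)) ∧
  (∀ (r t : K) (u : g1), T.sq (r, u, t) = S.sq u + (t * t) • w + t • D.D1 u) ∧
  (∀ x y : g0, M.B0 x y = N.B0 x y) ∧
  (∀ (r t r' t' : K) (u u' : g1),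
      M.B1 (r, u, t) (r', u', t') = N.B1 u u' + r * t' + r' * t)

/-- The compatibility conditions between an odd NIS `No`, an odd derivation `D`,
an even element `w = a₀` and a quadratic form `al`, entering the
`D_od`-extension (odd form case). -/
def DodDataOdd (S : SuperAlg K g0 g1) (No : OddNIS K g0 g1 S)
    (D : OddDer K g0 g1 S) (w : g0) (al : g1 → K) : Prop :=
  (∀ x y : g0, No.Bo y (D.D0 x) + No.Bo x (D.D0 y) = 0) ∧
  (∀ f g : g1, No.Bo (D.D1 f) g + No.Bo (D.D1 g) f = 0) ∧
  (∀ x : g0, No.Bo x (D.D0 x) = 0) ∧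
  (∀ x : g0, D.D1 (D.D0 x) = S.br0 w x) ∧
  (∀ f : g1, D.D0 (D.D1 f) = S.br1 w f) ∧
  D.D0 w = 0 ∧
  (∀ (c : K) (f : g1), al (c • f) = c * c * al f) ∧
  (∀ f g : g1, al (f + g) - al f - al g = No.Bo (D.D1 f) g)

/-- The structure constants of the `D_od`-extension `g = Kx ⊕ a ⊕ Ke` (odd form,
even `x`, odd `e`); an even element is written `(r, u)` for `r x + u`, an odd
element `(v, μ)` for `v + μ e`. -/
def DodExtOddFormulas (S : SuperAlg K g0 g1) (No : OddNIS K g0 g1 S)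
    (D : OddDer K g0 g1 S) (w : g0) (al : g1 → K) (m : K)
    (T : SuperAlg K (K × g0) (g1 × K)) (M : OddNIS K (K × g0) (g1 × K) T) : Prop :=
  (∀ (r r' : K) (x y : g0), T.br0 (r, x) (r', y) = (No.Bo y (D.D0 x), S.br0 x y)) ∧
  (∀ (r μ : K) (x : g0) (v : g1), T.br1 (r, x) (v, μ) = (S.br1 x v + μ • D.D0 x, 0)) ∧
  (∀ (μ : K) (v : g1),
      T.sq (v, μ) = (μ * μ * m + al v, S.sq v + (μ * μ) • w + μ • D.D1 v)) ∧
  (∀ (r μ : K) (x : g0) (v : g1), M.Bo (r, x) (v, μ) = No.Bo x v + r * μ)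

/-- The compatibility condition between an odd NIS `No` and an even derivation
`D`, entering the `D_ev`-extension (odd form case): `B(Du,v)+B(u,Dv)=0`. -/
def DevDataOdd (S : SuperAlg K g0 g1) (No : OddNIS K g0 g1 S)
    (D : EvenDer K g0 g1 S) : Prop :=
  ∀ (x : g0) (v : g1), No.Bo (D.D0 x) v + No.Bo x (D.D1 v) = 0

/-- The structure constants of the `D_ev`-extension `g = Kx ⊕ a ⊕ Ke` (odd form,
odd `x`, even `e`); an even element is written `(u, ν)` for `u + ν e`, an odd
element `(μ, v)` for `μ x + v`. -/
def DevExtOddFormulas (S : SuperAlg K g0 g1) (No : OddNIS K g0 g1 S)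
    (D : EvenDer K g0 g1 S)
    (T : SuperAlg K (g0 × K) (K × g1)) (M : OddNIS K (g0 × K) (K × g1) T) : Prop :=
  (∀ (ν ν' : K) (x y : g0),
      T.br0 (x, ν) (y, ν') = (S.br0 x y + ν • D.D0 y + ν' • D.D0 x, 0)) ∧
  (∀ (ν μ : K) (x : g0) (v : g1),
      T.br1 (x, ν) (μ, v) = (No.Bo (D.D0 x) v, S.br1 x v + ν • D.D1 v)) ∧
  (∀ (μ : K) (v : g1), T.sq (μ, v) = (S.sq v, 0)) ∧
  (∀ (ν μ : K) (x : g0) (v : g1), M.Bo (x, ν) (μ, v) = No.Bo x v + ν * μ)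

end Defs

end Char2DoubleExt

namespace Char2DoubleExt

section Reduction

variable {K : Type} [Field K] {g0 g1 : Type}
variable [AddCommGroup g0] [Module K g0] [AddCommGroup g1] [Module K g1]
variable {S : SuperAlg K g0 g1}

theorem mem_zEven_iff {x : g0} :
    x ∈ zEven K g0 g1 S ↔ (∀ y, S.br0 x y = 0) ∧ ∀ f, S.br1 x f = 0 := by
  simp [zEven]

theorem mem_zOdd_iff {f : g1} :
    f ∈ zOdd K g0 g1 S ↔ (∀ x, S.br1 x f = 0) ∧ ∀ g, S.br11 f g = 0 := by
  simp [zOdd]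

theorem add_self_eq_zero_of_charTwo (K : Type) {V : Type} [Field K] [CharP K 2] [AddCommGroup V]
    [Module K V] (v : V) : v + v = 0 := by
  rw [← one_smul K v, ← add_smul, CharTwo.add_self_eq_zero, zero_smul]

theorem SuperAlg.sq_zero (S : SuperAlg K g0 g1) : S.sq 0 = 0 := by
  simpa using S.sq_smul 0 0

theorem SuperAlg.br11_self [CharP K 2] (S : SuperAlg K g0 g1) (f : g1) : S.br11 f f = 0 := by
  have h := S.sq_add f f
  rwa [add_self_eq_zero_of_charTwo K, S.sq_zero, add_self_eq_zero_of_charTwo K, zero_add,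
    eq_comm] at h

theorem sq_mem_zEven {f : g1} (hf : f ∈ zOdd K g0 g1 S) : S.sq f ∈ zEven K g0 g1 S := by
  rw [mem_zOdd_iff] at hf
  refine mem_zEven_iff.2 ⟨fun y => ?_, fun g => ?_⟩
  · rw [S.sq_br0, hf.1, map_zero]
  · rw [S.sq_br1, hf.2, map_zero, LinearMap.zero_apply]

/-- The squaring is additive on odd central elements. -/
theorem sq_sum_smul {ι : Type*} (s : Finset ι) (d : ι → K) (b : ι → g1)
    (hb : ∀ i, b i ∈ zOdd K g0 g1 S) :
    S.sq (∑ i ∈ s, d i • b i) = ∑ i ∈ s, (d i * d i) • S.sq (b i) := by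
  classical
  induction s using Finset.induction_on with
  | empty => simp [S.sq_zero]
  | insert i s hi ih =>
    rw [Finset.sum_insert hi, Finset.sum_insert hi, S.sq_add, ih, S.sq_smul, map_smul,
      LinearMap.smul_apply, (mem_zOdd_iff.1 (hb i)).2, smul_zero, add_zero]

/-- Over a field in which every element is a square, the squaring has a nontrivial odd central zero
as soon as the odd part of the center is larger than the even part. -/
theorem exists_odd_central_sq_eq_zero [FiniteDimensional K g0] [FiniteDimensional K g1]
    (hperf : ∀ c : K, ∃ d : K, d * d = c)
    (hdim : Module.finrank K ↥(zOdd K g0 g1 S) > Module.finrank K ↥(zEven K g0 g1 S)) :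
    ∃ x : g1, x ≠ 0 ∧ x ∈ zOdd K g0 g1 S ∧ S.sq x = 0 := by
  let b := Module.finBasis K ↥(zOdd K g0 g1 S)
  let u : Fin (Module.finrank K ↥(zOdd K g0 g1 S)) → ↥(zEven K g0 g1 S) :=
    fun i => ⟨S.sq (b i), sq_mem_zEven (b i).2⟩
  have hu : ¬ LinearIndependent K u := fun h => by
    have := h.fintype_card_le_finrank
    simp only [Fintype.card_fin] at this
    omega
  obtain ⟨c, hc, i, hi⟩ := Fintype.not_linearIndependent_iff.1 hu
  choose r hr using hperf
  refine ⟨((∑ j, r (c j) • b j : ↥(zOdd K g0 g1 S)) : g1), fun h0 => hi ?_,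
    Subtype.coe_prop _, ?_⟩
  · have h := Fintype.linearIndependent_iff.1 b.linearIndependent (fun j => r (c j))
      (Subtype.ext h0) i
    rw [← hr (c i), h, zero_mul]
  · rw [AddSubmonoidClass.coe_finsetSum]
    simp only [Submodule.coe_smul]
    rw [sq_sum_smul _ _ _ fun j => (b j).2]
    have h := congrArg Subtype.val hc
    simpa [u, hr] using h

variable (N : EvenNIS K g0 g1 S) {x xs : g1}

/-- The orthogonal complement in the odd part of two odd elements. -/
def oddOrth (x xs : g1) : Submodule K g1 :=
  LinearMap.ker (N.B1 x) ⊓ LinearMap.ker (N.B1 xs)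

variable {N}

theorem mem_oddOrth {f : g1} : f ∈ oddOrth N x xs ↔ N.B1 x f = 0 ∧ N.B1 xs f = 0 := by
  simp [oddOrth]

/-- The orthogonal projection onto the complement of a hyperbolic pair. -/
def oddProj (h1 : N.B1 x xs = 1) : g1 →ₗ[K] ↥(oddOrth N x xs) :=
  (LinearMap.id - (N.B1 xs).smulRight x - (N.B1 x).smulRight xs).codRestrict _ fun f => by
    have h2 : N.B1 xs x = 1 := N.symm1 xs x ▸ h1
    simp [mem_oddOrth, h1, h2, N.alt1]

theorem coe_oddProj (h1 : N.B1 x xs = 1) (f : g1) :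
    (oddProj h1 f : g1) = f - N.B1 xs f • x - N.B1 x f • xs := rfl

theorem oddOrth_disjoint_span (h1 : N.B1 x xs = 1) :
    Submodule.span K ({x, xs} : Set g1) ⊓ oddOrth N x xs = ⊥ := by
  have h2 : N.B1 xs x = 1 := N.symm1 xs x ▸ h1
  rw [eq_bot_iff]
  rintro f ⟨hf, hA⟩
  obtain ⟨a, b, rfl⟩ := Submodule.mem_span_pair.1 hf
  have h := mem_oddOrth.1 hA
  simp only [map_add, map_smul, N.alt1, h1, h2, smul_eq_mul, mul_zero, mul_one, zero_add,
    add_zero] at h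
  simp [h.1, h.2]

theorem span_sup_oddOrth (h1 : N.B1 x xs = 1) :
    Submodule.span K ({x, xs} : Set g1) ⊔ oddOrth N x xs = ⊤ := by
  refine eq_top_iff.2 fun f _ => Submodule.mem_sup.2
    ⟨_, Submodule.mem_span_pair.2 ⟨N.B1 xs f, N.B1 x f, rfl⟩, _, (oddProj h1 f).2, ?_⟩
  rw [coe_oddProj]
  abel

theorem notMem_span_of_pairing (h1 : N.B1 x xs = 1) :
    xs ∉ Submodule.span K ({x} : Set g1) := by
  rw [Submodule.mem_span_singleton]
  rintro ⟨a, rfl⟩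
  simp [N.alt1] at h1

theorem finrank_oddOrth [FiniteDimensional K g1] (h1 : N.B1 x xs = 1) :
    Module.finrank K ↥(oddOrth N x xs) + 2 = Module.finrank K g1 := by
  have h2 : N.B1 xs x = 1 := N.symm1 xs x ▸ h1
  have hli : LinearIndependent K ![x, xs] := by
    refine LinearIndependent.pair_iff.2 fun a b hab => ⟨?_, ?_⟩
    · simpa [N.alt1, h2] using congrArg (N.B1 xs) hab
    · simpa [N.alt1, h1] using congrArg (N.B1 x) hab
  have hrank := finrank_span_eq_card hli
  rw [Matrix.range_cons_cons_empty, Fintype.card_fin] at hrank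
  have := Submodule.finrank_add_eq_of_isCompl
    (IsCompl.of_eq (oddOrth_disjoint_span h1) (span_sup_oddOrth h1))
  omega

/-- If `x` is central, the action of the even part lands in the orthogonal of `x`. -/
theorem B1_br1_of_central (hx : x ∈ zOdd K g0 g1 S) (y : g0) (f : g1) :
    N.B1 x (S.br1 y f) = 0 := by
  rw [N.symm1, N.inv1, S.br11_comm, (mem_zOdd_iff.1 hx).2, map_zero]

theorem B1_br1_self [CharP K 2] (y : g0) (f : g1) : N.B1 f (S.br1 y f) = 0 := by
  rw [N.symm1, N.inv1, S.br11_self, map_zero]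

theorem coe_oddProj_br1 (h1 : N.B1 x xs = 1) (hx : x ∈ zOdd K g0 g1 S) (y : g0) (f : g1) :
    (oddProj h1 (S.br1 y f) : g1) = S.br1 y f - N.B1 xs (S.br1 y f) • x := by
  rw [coe_oddProj, B1_br1_of_central hx, zero_smul, sub_zero]

theorem coe_oddProj_br1_self [CharP K 2] (h1 : N.B1 x xs = 1) (hx : x ∈ zOdd K g0 g1 S)
    (y : g0) : (oddProj h1 (S.br1 y xs) : g1) = S.br1 y xs := by
  rw [coe_oddProj_br1 h1 hx, B1_br1_self, zero_smul, sub_zero]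

theorem br1_oddProj_br1 (h1 : N.B1 x xs = 1) (hx : x ∈ zOdd K g0 g1 S) (z y : g0) (f : g1) :
    S.br1 z (oddProj h1 (S.br1 y f) : g1) = S.br1 z (S.br1 y f) := by
  rw [coe_oddProj_br1 h1 hx, map_sub, map_smul, (mem_zOdd_iff.1 hx).1, smul_zero, sub_zero]

theorem br11_oddProj_br1 (h1 : N.B1 x xs = 1) (hx : x ∈ zOdd K g0 g1 S) (g : g1) (y : g0)
    (f : g1) : S.br11 g (oddProj h1 (S.br1 y f) : g1) = S.br11 g (S.br1 y f) := by
  rw [coe_oddProj_br1 h1 hx, map_sub, map_smul, S.br11_comm g x, (mem_zOdd_iff.1 hx).2,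
    smul_zero, sub_zero]

theorem B1_oddProj_coe (h1 : N.B1 x xs = 1) (f : g1) (g : ↥(oddOrth N x xs)) :
    N.B1 (oddProj h1 f : g1) g = N.B1 f g := by
  have h := mem_oddOrth.1 g.2
  simp [coe_oddProj, h.1, h.2]

theorem B1_coe_oddProj (h1 : N.B1 x xs = 1) (f : g1) (g : ↥(oddOrth N x xs)) :
    N.B1 (g : g1) (oddProj h1 f) = N.B1 g f := by
  rw [N.symm1, B1_oddProj_coe, N.symm1]

/-- The reduction `x^⊥ / x` of a Lie superalgebra by an odd central element `x`, realized on the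
orthogonal complement of a hyperbolic pair. -/
def reducedAlg (h1 : N.B1 x xs = 1) (hx : x ∈ zOdd K g0 g1 S) :
    SuperAlg K g0 ↥(oddOrth N x xs) where
  br0 := S.br0
  br1 := S.br1.compr₂ (oddProj h1) |>.compl₂ (oddOrth N x xs).subtype
  br11 := S.br11.compl₁₂ (oddOrth N x xs).subtype (oddOrth N x xs).subtype
  sq f := S.sq f
  sq_smul c f := S.sq_smul c f
  sq_add f g := S.sq_add f g
  br0_self := S.br0_self
  br11_comm f g := S.br11_comm f g
  jacobi0 := S.jacobi0
  act_br y z f := by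
    simp [br1_oddProj_br1, hx, S.act_br]
  jacobi_mix y f g := by
    simp [br11_oddProj_br1, hx, S.jacobi_mix]
  sq_br0 f y := by
    simp [br11_oddProj_br1, hx, S.sq_br0]
  sq_br1 f g := by
    simp [S.sq_br1]

/-- The form induced on the reduction by an odd central element. -/
def reducedNIS (h1 : N.B1 x xs = 1) (hx : x ∈ zOdd K g0 g1 S) :
    EvenNIS K g0 ↥(oddOrth N x xs) (reducedAlg h1 hx) where
  B0 := N.B0
  B1 := N.B1.compl₁₂ (oddOrth N x xs).subtype (oddOrth N x xs).subtype
  symm0 := N.symm0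
  symm1 f g := N.symm1 f g
  alt1 f := N.alt1 f
  nondeg0 := N.nondeg0
  nondeg1 f hf := Subtype.ext <| N.nondeg1 f fun g => by
    rw [← B1_coe_oddProj h1]
    exact hf (oddProj h1 g)
  inv0 := N.inv0
  inv1 y f g := by
    simp [reducedAlg, B1_oddProj_coe, N.inv1]
  inv2 f g y := by
    simp [reducedAlg, B1_coe_oddProj, N.inv2]

/-- The odd derivation induced on the reduction by bracketing with `xs`. -/
def reducedDer [CharP K 2] (h1 : N.B1 x xs = 1) (hx : x ∈ zOdd K g0 g1 S) :
    OddDer K g0 ↥(oddOrth N x xs) (reducedAlg h1 hx) where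
  D0 := oddProj h1 ∘ₗ S.br1.flip xs
  D1 := S.br11 xs ∘ₗ (oddOrth N x xs).subtype
  der0 y z := by
    simp [reducedAlg, S.act_br, coe_oddProj_br1_self, hx]
  der1 y f := by
    have h := S.jacobi_mix y xs f
    simp only [reducedAlg, LinearMap.comp_apply, LinearMap.compr₂_apply, LinearMap.compl₂_apply,
      LinearMap.compl₁₂_apply, Submodule.subtype_apply, LinearMap.flip_apply,
      br11_oddProj_br1 h1 hx, coe_oddProj_br1_self h1 hx]
    have h2 := add_self_eq_zero_of_charTwo K (S.br11 xs (S.br1 y f))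
    rw [S.br11_comm (S.br1 y xs), ← sub_eq_zero, ← sub_eq_zero.2 (h2.trans h.symm)]
    abel
  der_sq f := by
    simp [reducedAlg, S.sq_br1, S.br11_comm xs]

theorem reduced_dodData [CharP K 2] (h1 : N.B1 x xs = 1) (hx : x ∈ zOdd K g0 g1 S) :
    DodDataEven K g0 ↥(oddOrth N x xs) (reducedAlg h1 hx) (reducedNIS h1 hx)
      (reducedDer h1 hx) (S.sq xs) := by
  refine ⟨fun y f => ?_, fun y => ?_, fun f => ?_, ?_⟩
  · simp [reducedNIS, reducedDer, B1_oddProj_coe, N.inv1]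
  · simp [reducedDer, reducedAlg, coe_oddProj_br1_self, hx, S.sq_br0]
  · simp [reducedDer, reducedAlg, S.sq_br1]
  · simp [reducedDer, S.sq_br1, S.br11_self]

theorem EvenNIS.exists_pairing_eq_one (N : EvenNIS K g0 g1 S) (hx : x ≠ 0) :
    ∃ xs, N.B1 x xs = 1 := by
  obtain ⟨g, hg⟩ : ∃ g, N.B1 x g ≠ 0 := by
    by_contra! h
    exact hx (N.nondeg1 x h)
  exact ⟨(N.B1 x g)⁻¹ • g, by simp [hg]⟩

end Reduction

/-- Proposition 5.3 of the paper: let `K` be a perfect field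
of characteristic 2 and `(g, B)` an irreducible finite-dimensional NIS-Lie
superalgebra over `K` with `B` even. If `dim z(g)_1 > dim z(g)_0`, then there
is a nonzero odd central `x` with `s_g(x) = 0` (in particular
`z(g)_1 ∩ C(g,B) ≠ {0}`), and `(g, B)` is obtained as a `D_od`-extension (even
form, odd `x`, `x*`) of a NIS-Lie superalgebra of dimension `dim g − 2`. -/
theorem stmt19 (K : Type) [Field K] [CharP K 2] (g0 g1 : Type)
    [AddCommGroup g0] [Module K g0] [AddCommGroup g1] [Module K g1]
    [FiniteDimensional K g0] [FiniteDimensional K g1]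
    (S : SuperAlg K g0 g1) (N : EvenNIS K g0 g1 S)
    (hperf : ∀ c : K, ∃ d : K, d * d = c)
    (hirr : EvenIrreducible K g0 g1 S N)
    (hdim : Module.finrank K ↥(zOdd K g0 g1 S) > Module.finrank K ↥(zEven K g0 g1 S)) :
    (∃ x : g1, x ≠ 0 ∧ x ∈ zOdd K g0 g1 S ∧ S.sq x = 0 ∧
        (∀ v : g1, N.B0 (S.sq x) (S.sq v) = 0)) ∧
    (∃ (x xs : g1) (A : Submodule K g1) (T : SuperAlg K g0 ↥A)
      (M : EvenNIS K g0 ↥A T) (D : OddDer K g0 ↥A T) (w : g0),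
      DodDataEven K g0 ↥A T M D w ∧
      x ≠ 0 ∧ xs ∉ Submodule.span K ({x} : Set g1) ∧
      Submodule.span K ({x, xs} : Set g1) ⊓ A = ⊥ ∧
      Submodule.span K ({x, xs} : Set g1) ⊔ A = ⊤ ∧
      Module.finrank K ↥A + 2 = Module.finrank K g1 ∧
      (∀ y : g0, S.br1 y x = 0) ∧ (∀ f : g1, S.br11 x f = 0) ∧ S.sq x = 0 ∧
      (∀ y z : g0, S.br0 y z = T.br0 y z) ∧
      (∀ (y : g0) (f : A), S.br1 y ↑f = ↑(T.br1 y f) + M.B1 (D.D0 y) f • x) ∧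
      (∀ y : g0, S.br1 y xs = ↑(D.D0 y)) ∧
      (∀ f g : A, S.br11 ↑f ↑g = T.br11 f g) ∧
      (∀ f : A, S.br11 xs ↑f = D.D1 f) ∧
      (∀ f : A, S.sq ↑f = T.sq f) ∧
      S.sq xs = w ∧
      (∀ y z : g0, N.B0 y z = M.B0 y z) ∧
      (∀ f g : A, N.B1 ↑f ↑g = M.B1 f g) ∧
      N.B1 x x = 0 ∧ N.B1 x xs = 1 ∧ N.B1 xs xs = 0 ∧
      (∀ f : A, N.B1 x ↑f = 0) ∧ (∀ f : A, N.B1 xs ↑f = 0)) := by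
  obtain ⟨x, hx0, hx, hsq⟩ := exists_odd_central_sq_eq_zero hperf hdim
  obtain ⟨xs, h1⟩ := N.exists_pairing_eq_one hx0
  have hz := mem_zOdd_iff.1 hx
  refine ⟨⟨x, hx0, hx, hsq, fun v => by simp [hsq]⟩, x, xs, oddOrth N x xs, reducedAlg h1 hx,
    reducedNIS h1 hx, reducedDer h1 hx, S.sq xs, reduced_dodData h1 hx, hx0,
    notMem_span_of_pairing h1, oddOrth_disjoint_span h1, span_sup_oddOrth h1,
    finrank_oddOrth h1, hz.1, hz.2, hsq, fun _ _ => rfl, fun y f => ?_,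
    fun y => (coe_oddProj_br1_self h1 hx y).symm, fun _ _ => rfl, fun _ => rfl, fun _ => rfl,
    rfl, fun _ _ => rfl, fun _ _ => rfl, N.alt1 x, h1, N.alt1 xs,
    fun f => (mem_oddOrth.1 f.2).1, fun f => (mem_oddOrth.1 f.2).2⟩
  have hD : (reducedNIS h1 hx).B1 ((reducedDer h1 hx).D0 y) f = N.B1 xs (S.br1 y f) := by
    simp [reducedNIS, reducedDer, B1_oddProj_coe, N.inv1, N.symm1 xs, S.br11_comm xs]
  rw [hD]
  exact eq_add_of_sub_eq (coe_oddProj_br1 h1 hx y (f : g1)).symm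

end Char2DoubleExt
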